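/- arXiv:1101.2193 — 2 statements merged into one kernel-verified Lean document; each statement's English description precedes it below -/
import Mathlib

section
/- For any R > 0, any center x0 ∈ ℝ³, any exponent δ with 1/2 < δ < 1, there exists a smooth function ψ : ℝ³ → ℝ compactly supported in B(x0, 2R) with 0 ≤ ψ ≤ 1, ψ = 1 on B(x0, R), and a constant C0 = C0(δ) > 0 (independent of R and x0) such that |∇ψ(x)| ≤ (C0/R) ψ(x)^δ and |Δψ(x)| ≤ (C0/R²) ψ(x)^{2δ-1} for all x ∈ ℝ³. -/
open Metric

/-- The Laplacian of a scalar function on `ℝ³` (sum of the second partial derivatives). -/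
noncomputable def lap3 (f : EuclideanSpace ℝ (Fin 3) → ℝ) (x : EuclideanSpace ℝ (Fin 3)) : ℝ :=
  ∑ i : Fin 3,
    fderiv ℝ (fun y => fderiv ℝ f y (EuclideanSpace.single i 1)) x (EuclideanSpace.single i 1)

lemma cutoff_pow_aux (t : ℝ) (ht0 : 0 ≤ t) (ht1 : t ≤ 1) (n k : ℕ) (hk : k ≠ 0)
    (e : ℝ) (_ : 0 < e) (h : (n : ℝ) * e ≤ k) : t ^ k ≤ (t ^ n) ^ e := by
  rcases ht0.eq_or_lt with h0 | h0
  · subst h0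
    rw [zero_pow hk]
    positivity
  · rw [← Real.rpow_natCast t n, ← Real.rpow_mul ht0, ← Real.rpow_natCast t k]
    exact Real.rpow_le_rpow_of_exponent_ge h0 ht1 h

lemma cutoff_bump_aux : ∃ φ : EuclideanSpace ℝ (Fin 3) → ℝ,
    ContDiff ℝ (⊤ : ℕ∞) φ ∧ HasCompactSupport φ ∧ (∀ x, 0 ≤ φ x) ∧ (∀ x, φ x ≤ 1) ∧
    (∀ x, ‖x‖ ≤ 1 → φ x = 1) ∧ (∀ x, 3 / 2 ≤ ‖x‖ → φ x = 0) := by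
  have h : ∃ f : ContDiffBump (0 : EuclideanSpace ℝ (Fin 3)), f.rIn = 1 ∧ f.rOut = 3 / 2 :=
    ⟨⟨1, 3 / 2, by norm_num, by norm_num⟩, rfl, rfl⟩
  obtain ⟨f, hi, ho⟩ := h
  refine ⟨f, f.contDiff, f.hasCompactSupport, fun x => f.nonneg, fun x => f.le_one, ?_, ?_⟩
  · intro x hx
    exact f.one_of_mem_closedBall (by rw [hi]; simpa using hx)
  · intro x hx
    exact f.zero_of_le_dist (by rw [ho]; simpa using hx)

lemma cutoff_bound_aux {E F : Type*} [NormedAddCommGroup E] [NormedSpace ℝ E]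
    [NormedAddCommGroup F] [NormedSpace ℝ F] {φ : E → F}
    (hs : ContDiff ℝ (⊤ : ℕ∞) φ) (hcs : HasCompactSupport φ) :
    ∃ A : ℝ, 0 ≤ A ∧ (∀ x, ‖fderiv ℝ φ x‖ ≤ A) := by
  have hs1 : Continuous (fderiv ℝ φ) := hs.continuous_fderiv (by simp)
  have c1 : HasCompactSupport (fderiv ℝ φ) := hcs.fderiv (𝕜 := ℝ)
  have hr : IsCompact (Set.range (fderiv ℝ φ)) := c1.isCompact_range hs1
  have hr2 : Bornology.IsBounded (Set.range (fderiv ℝ φ)) := hr.isBounded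
  obtain ⟨A, hA⟩ := hr2.exists_norm_le
  exact ⟨A, (norm_nonneg (fderiv ℝ φ 0)).trans (hA _ ⟨0, rfl⟩), fun x => hA _ ⟨x, rfl⟩⟩

set_option maxHeartbeats 1000000 in
/-- **Refined spatial cut-offs exist.** For any `1/2 < δ < 1` there is a constant `C0 > 0`
(depending only on `δ`) such that for every `R > 0` and every center `x0 ∈ ℝ³` there is a
smooth `ψ` compactly supported in `B(x0, 2R)`, `0 ≤ ψ ≤ 1`, `ψ = 1` on `B(x0, R)`, with
`|∇ψ| ≤ (C0/R) ψ^δ` and `|Δψ| ≤ (C0/R²) ψ^(2δ-1)` pointwise. -/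
theorem refined_spatial_cutoff_exists (δ : ℝ) (hδ1 : 1 / 2 < δ) (hδ2 : δ < 1) :
    ∃ C0 : ℝ, 0 < C0 ∧
      ∀ (R : ℝ), 0 < R → ∀ x0 : EuclideanSpace ℝ (Fin 3),
        ∃ ψ : EuclideanSpace ℝ (Fin 3) → ℝ,
          ContDiff ℝ (⊤ : ℕ∞) ψ ∧ HasCompactSupport ψ ∧ tsupport ψ ⊆ ball x0 (2 * R) ∧
          (∀ x, 0 ≤ ψ x) ∧ (∀ x, ψ x ≤ 1) ∧ (∀ x ∈ ball x0 R, ψ x = 1) ∧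
          (∀ x, ‖gradient ψ x‖ ≤ C0 / R * ψ x ^ δ) ∧
          (∀ x, |lap3 ψ x| ≤ C0 / R ^ 2 * ψ x ^ (2 * δ - 1)) := by
  obtain ⟨φ, hs, hcs, hn, h1, hone, hzero⟩ := cutoff_bump_aux
  have hs1 : ContDiff ℝ (⊤ : ℕ∞) (fderiv ℝ φ) := hs.fderiv_right (by simp)
  have hs2 : ContDiff ℝ (⊤ : ℕ∞) (fderiv ℝ (fderiv ℝ φ)) := hs1.fderiv_right (by simp)
  have c1 : HasCompactSupport (fderiv ℝ φ) := hcs.fderiv (𝕜 := ℝ)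
  obtain ⟨A, hA0, hA⟩ := cutoff_bound_aux hs hcs
  obtain ⟨B, hB0, hB⟩ := cutoff_bound_aux hs1 c1
  obtain ⟨m, hm⟩ := exists_nat_ge (1 / (1 - δ))
  have hd : 0 < 1 - δ := by linarith
  rw [div_le_iff₀ hd] at hm
  have hm3 : 2 < m := by
    have : (2 : ℝ) < m := by
      have h0 : (0:ℝ) ≤ m := Nat.cast_nonneg m
      nlinarith
    exact_mod_cast this
  obtain ⟨k, rfl⟩ : ∃ k, m = k + 2 := ⟨m - 2, by omega⟩
  have hk : k ≠ 0 := by omega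
  push_cast at hm
  have hk0 : (0:ℝ) ≤ k := Nat.cast_nonneg k
  set K1 : ℝ := (k + 2) * A with hK1
  set K2 : ℝ := (k + 2) * ((k + 1) * A ^ 2 + B) with hK2
  have hK10 : 0 ≤ K1 := by positivity
  have hK20 : 0 ≤ K2 := by positivity
  refine ⟨K1 + 3 * K2 + 1, by positivity, fun R hR x0 => ?_⟩
  set u : EuclideanSpace ℝ (Fin 3) → EuclideanSpace ℝ (Fin 3) := fun x => R⁻¹ • (x - x0) with hu
  have hus : ContDiff ℝ (⊤ : ℕ∞) u := by fun_prop
  have hud : ∀ x, HasFDerivAt u (R⁻¹ • ContinuousLinearMap.id ℝ (EuclideanSpace ℝ (Fin 3))) x :=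
    fun x => ((hasFDerivAt_id x).sub_const x0).const_smul R⁻¹
  have hun : ∀ x, ‖u x‖ = dist x x0 / R := fun x => by
    simp only [hu]
    rw [norm_smul, Real.norm_of_nonneg (by positivity), dist_eq_norm]; field_simp
  have hφd : ∀ x, HasFDerivAt (fun y => φ (u y)) (R⁻¹ • fderiv ℝ φ (u x)) x := fun x => by
    have := ((hs.differentiable (by simp)) (u x)).hasFDerivAt.comp x (hud x)
    refine this.congr_fderiv ?_
    ext v; simp
  have hφd2 : ∀ x, HasFDerivAt (fun y => fderiv ℝ φ (u y)) (R⁻¹ • fderiv ℝ (fderiv ℝ φ) (u x)) x :=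
    fun x => by
    have := ((hs1.differentiable (by simp)) (u x)).hasFDerivAt.comp x (hud x)
    refine this.congr_fderiv ?_
    ext v; simp
  have hD1 : ∀ x, fderiv ℝ (fun y => φ (u y) ^ (k + 2)) x
      = ((k + 2) * φ (u x) ^ (k + 1) * R⁻¹) • fderiv ℝ φ (u x) := fun x => by
    rw [((hφd x).pow (k + 2)).fderiv]
    ext v; simp; ring
  have hsupp : Function.support (fun x => φ (u x) ^ (k + 2)) ⊆ closedBall x0 (3 / 2 * R) := by
    intro x hx
    by_contra hc
    rw [mem_closedBall, not_le] at hc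
    apply hx
    have : φ (u x) = 0 := hzero _ (by rw [hun, le_div_iff₀ hR]; exact hc.le)
    simp [this]
  refine ⟨fun x => φ (u x) ^ (k + 2), (hs.comp hus).pow _, ?_, ?_, fun x => pow_nonneg (hn _) _,
    fun x => pow_le_one₀ (hn _) (h1 _), ?_, ?_, ?_⟩
  · exact HasCompactSupport.of_support_subset_isCompact (isCompact_closedBall _ _) hsupp
  · exact (closure_minimal hsupp isClosed_closedBall).trans
      (closedBall_subset_ball (by linarith))
  · intro x hx
    have : φ (u x) = 1 := hone _ (by rw [hun, div_le_one hR]; exact (mem_ball.1 hx).le)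
    simp [this]
  · intro x
    have e : ‖gradient (fun x => φ (u x) ^ (k + 2)) x‖
        = ‖fderiv ℝ (fun x => φ (u x) ^ (k + 2)) x‖ := by
      unfold gradient; exact LinearIsometryEquiv.norm_map _ _
    have hp := pow_nonneg (hn (u x)) (k + 1)
    rw [e, hD1, norm_smul, Real.norm_of_nonneg (by positivity)]
    have hpow := cutoff_pow_aux _ (hn (u x)) (h1 (u x)) (k + 2) (k + 1) (by omega) δ (by linarith)
      (by push_cast; linarith)
    calc _ ≤ ((k + 2) * φ (u x) ^ (k + 1) * R⁻¹) * A := by gcongr; exact hA _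
      _ = K1 / R * φ (u x) ^ (k + 1) := by rw [hK1]; field_simp
      _ ≤ _ := by
        gcongr
        linarith
  · intro x
    have hpow := cutoff_pow_aux _ (hn (u x)) (h1 (u x)) (k + 2) k hk (2 * δ - 1) (by linarith)
      (by push_cast; linarith)
    have hp := pow_nonneg (hn (u x)) k
    have key : ∀ i : Fin 3, |fderiv ℝ (fun y => fderiv ℝ (fun x => φ (u x) ^ (k + 2)) y
        (EuclideanSpace.single i 1)) x (EuclideanSpace.single i 1)|
        ≤ K2 / R ^ 2 * φ (u x) ^ k := by
      intro i
      set w : EuclideanSpace ℝ (Fin 3) := EuclideanSpace.single i 1 with hw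
      have hw1 : ‖w‖ = 1 := by simp [hw]
      have hfun : (fun y => fderiv ℝ (fun x => φ (u x) ^ (k + 2)) y w)
          = fun y => ((k + 2) * R⁻¹) * (φ (u y) ^ (k + 1) * fderiv ℝ φ (u y) w) := by
        funext y; rw [hD1]; simp; ring
      have hd' := (((hφd x).pow (k + 1)).mul
        ((hφd2 x).clm_apply (hasFDerivAt_const w x))).const_mul ((k + 2) * R⁻¹)
      have hval : fderiv ℝ (fun y => fderiv ℝ (fun x => φ (u x) ^ (k + 2)) y w) x w
          = (k + 2) / R ^ 2 * φ (u x) ^ k * ((k + 1) * (fderiv ℝ φ (u x) w) ^ 2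
            + φ (u x) * fderiv ℝ (fderiv ℝ φ) (u x) w w) := by
        have hd2 : HasFDerivAt (fun y => ((k + 2) * R⁻¹) * (φ (u y) ^ (k + 1) * fderiv ℝ φ (u y) w))
          _ x := hd'
        rw [hfun, hd2.fderiv]
        simp
        field_simp
        ring
      have b1 : |fderiv ℝ φ (u x) w| ≤ A := by
        have := (fderiv ℝ φ (u x)).le_opNorm w
        rw [hw1, mul_one] at this
        exact this.trans (hA _)
      have b2 : |fderiv ℝ (fderiv ℝ φ) (u x) w w| ≤ B := by
        have := (fderiv ℝ (fderiv ℝ φ) (u x)).le_opNorm₂ w w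
        rw [hw1, mul_one, mul_one] at this
        exact this.trans (hB _)
      have b3 : (fderiv ℝ φ (u x) w) ^ 2 ≤ A ^ 2 := sq_le_sq' (abs_le.1 b1).1 (abs_le.1 b1).2
      have b4 : |φ (u x) * fderiv ℝ (fderiv ℝ φ) (u x) w w| ≤ B := by
        rw [abs_mul, abs_of_nonneg (hn _)]
        calc _ ≤ 1 * B := by gcongr; exact h1 _
          _ = B := one_mul _
      rw [hval, abs_mul, abs_of_nonneg (by positivity)]
      calc _ ≤ (k + 2) / R ^ 2 * φ (u x) ^ k * ((k + 1) * A ^ 2 + B) := by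
            gcongr
            refine (abs_add_le _ _).trans ?_
            rw [abs_of_nonneg (by positivity)]
            gcongr
        _ = _ := by rw [hK2]; ring
    unfold lap3
    calc _ ≤ ∑ i : Fin 3, K2 / R ^ 2 * φ (u x) ^ k :=
          (Finset.abs_sum_le_sum_abs _ _).trans (Finset.sum_le_sum fun i _ => key i)
      _ = (3 * K2) / R ^ 2 * φ (u x) ^ k := by simp; ring
      _ ≤ _ := by
        gcongr
        linarith
end

section
/- For any T > 0 and any δ with 1/2 < δ < 1, there exists a smooth function η : ℝ → ℝ compactly supported in (0, 2T) with 0 ≤ η ≤ 1, η = 1 on [T/4, 5T/4], and a constant C0 = C0(δ) > 0 independent of T such that |η'(t)| ≤ (C0/T) η(t)^δ for all t. -/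
/-- **Refined temporal cut-offs exist.** For any `1/2 < δ < 1` there is a constant `C0 > 0`
(depending only on `δ`) such that for every `T > 0` there is a smooth `η : ℝ → ℝ` compactly
supported in `(0, 2T)`, `0 ≤ η ≤ 1`, `η = 1` on `[T/4, 5T/4]`, with `|η'| ≤ (C0/T) η^δ`
pointwise. -/
theorem refined_temporal_cutoff_exists (δ : ℝ) (hδ1 : 1 / 2 < δ) (hδ2 : δ < 1) :
    ∃ C0 : ℝ, 0 < C0 ∧
      ∀ T : ℝ, 0 < T →
        ∃ η : ℝ → ℝ,
          ContDiff ℝ (⊤ : ℕ∞) η ∧ HasCompactSupport η ∧ tsupport η ⊆ Set.Ioo 0 (2 * T) ∧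
          (∀ t, 0 ≤ η t) ∧ (∀ t, η t ≤ 1) ∧
          (∀ t ∈ Set.Icc (T / 4) (5 * T / 4), η t = 1) ∧
          (∀ t, |deriv η t| ≤ C0 / T * η t ^ δ) := by
  -- a fixed bump function around 3/4
  let φ : ContDiffBump (3 / 4 : ℝ) := ⟨1 / 2, 5 / 8, by norm_num, by norm_num⟩
  have hφ : ContDiff ℝ (⊤ : ℕ∞) φ := φ.contDiff
  obtain ⟨M, hM⟩ : ∃ M, ∀ x, ‖deriv φ x‖ ≤ M :=
    (φ.hasCompactSupport.deriv (𝕜 := ℝ)).exists_bound_of_continuous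
      (hφ.continuous_deriv (by norm_cast))
  have hM0 : 0 ≤ M := (norm_nonneg _).trans (hM 0)
  -- the exponent
  obtain ⟨n, hn⟩ := exists_nat_gt (1 / (1 - δ))
  have h1δ : 0 < 1 - δ := by linarith
  rw [div_lt_iff₀ h1δ] at hn
  have hn0 : 0 < n := by
    rcases Nat.eq_zero_or_pos n with h | h
    · subst h; norm_num at hn
    · exact h
  have key : ∀ x : ℝ, 0 ≤ x → x ≤ 1 → x ^ (n - 1) ≤ (x ^ n) ^ δ := by
    intro x hx0 hx1
    rcases hx0.eq_or_lt with h | h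
    · have : n - 1 ≠ 0 := by
        intro h'
        have : n = 1 := by omega
        subst this
        norm_num at hn; linarith
      rw [← h, zero_pow this]
      positivity
    · rw [← Real.rpow_natCast, ← Real.rpow_natCast, ← Real.rpow_mul hx0]
      apply Real.rpow_le_rpow_of_exponent_ge h hx1
      rw [Nat.cast_sub hn0]; push_cast; linarith
  refine ⟨n * (M + 1), by positivity, fun T hT => ?_⟩
  have hsupp : tsupport (fun t => φ (t / T) ^ n) ⊆ Set.Icc (T / 8) (11 * T / 8) := by
    apply closure_minimal _ isClosed_Icc
    intro t ht
    have h1 : φ (t / T) ≠ 0 := fun h => ht (by simp [h, hn0.ne'])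
    have h2 : t / T ∈ Metric.ball (3 / 4 : ℝ) (5 / 8) := by
      have : t / T ∈ Function.support φ := h1
      rwa [φ.support_eq] at this
    rw [Metric.mem_ball, Real.dist_eq, abs_lt] at h2
    have h3 : t / T * T = t := div_mul_cancel₀ _ hT.ne'
    constructor <;> nlinarith [h2.1, h2.2]
  refine ⟨fun t => φ (t / T) ^ n, (hφ.comp (contDiff_id.div_const T)).pow n,
    isCompact_Icc.of_isClosed_subset (isClosed_tsupport _) hsupp, ?_, ?_, ?_, ?_, ?_⟩
  · intro t ht
    have := hsupp ht
    constructor <;> linarith [this.1, this.2]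
  · intro t; exact pow_nonneg φ.nonneg n
  · intro t; exact pow_le_one₀ φ.nonneg φ.le_one
  · intro t ht
    have : φ (t / T) = 1 := by
      apply φ.one_of_mem_closedBall
      change t / T ∈ Metric.closedBall (3 / 4 : ℝ) (1 / 2)
      have h3 : t / T * T = t := div_mul_cancel₀ _ hT.ne'
      rw [Metric.mem_closedBall, Real.dist_eq, abs_le]
      have a := (le_div_iff₀ hT).2 (show 1 / 4 * T ≤ t by linarith [ht.1])
      have b := (div_le_iff₀ hT).2 (show t ≤ 5 / 4 * T by linarith [ht.2])
      constructor <;> linarith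
    simp [this]
  · intro t
    have hd : HasDerivAt φ (deriv φ (t / T)) (t / T) :=
      ((hφ.differentiable (by simp)) _).hasDerivAt
    have h := (hd.comp t ((hasDerivAt_id t).div_const T)).pow n
    have e : deriv (fun t => φ (t / T) ^ n) t
        = n * φ (t / T) ^ (n - 1) * (deriv φ (t / T) * (1 / T)) := h.deriv
    have hp : 0 ≤ φ (t / T) ^ (n - 1) := pow_nonneg φ.nonneg _
    have hk := key (φ (t / T)) φ.nonneg φ.le_one
    have hm := hM (t / T)
    rw [Real.norm_eq_abs] at hm
    rw [e, abs_mul, abs_mul, abs_mul, abs_of_nonneg hp, Nat.abs_cast, abs_of_pos (one_div_pos.2 hT)]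
    calc n * φ (t / T) ^ (n - 1) * (|deriv φ (t / T)| * (1 / T))
        ≤ n * (φ (t / T) ^ n) ^ δ * ((M + 1) * (1 / T)) := by
          gcongr
          · exact mul_nonneg (Nat.cast_nonneg n) (hp.trans hk)
          · linarith
      _ = n * (M + 1) / T * (φ (t / T) ^ n) ^ δ := by ring
end
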